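/- arXiv:2212.14579 — 2 statements merged into one kernel-verified Lean document; each statement's English description precedes it below -/
import Mathlib

section
/- Suppose f is holomorphic on a bounded domain Ω ⊂ ℂⁿ and omits the values 0 and 1. If a ∈ Ω and |f(a)| < M, then for every sufficiently small ε > 0 there is a constant C > 0, depending only on Ω, a, M, and ε (but not on f), such that |f(z)| < C for all z ∈ Ω with dist(z, ∂Ω) ≥ ε. -/
open Metric

lemma sch_log {g : ℂ → ℂ} (hg : DifferentiableOn ℂ g (ball 0 1)) (h0 : ∀ z ∈ ball (0:ℂ) 1, g z ≠ 0) :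
    ∃ L : ℂ → ℂ, DifferentiableOn ℂ L (ball 0 1) ∧ L 0 = Complex.log (g 0) ∧
      ∀ z ∈ ball (0:ℂ) 1, Complex.exp (L z) = g z := by
  have hd : DifferentiableOn ℂ (fun z => deriv g z / g z) (ball 0 1) :=
    (hg.deriv isOpen_ball).div hg h0
  obtain ⟨L, hL0, hL⟩ := hd.isExactOn_ball.with_val_at 0 (Complex.log (g 0))
  have hmem : (0:ℂ) ∈ ball (0:ℂ) 1 := by simp
  refine ⟨L, fun z hz => (hL z hz).differentiableAt.differentiableWithinAt, hL0, ?_⟩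
  have hder : ∀ z ∈ ball (0:ℂ) 1, HasDerivAt (fun z => g z * Complex.exp (-L z)) 0 z := by
    intro z hz
    have h1 := (hg.differentiableAt (isOpen_ball.mem_nhds hz)).hasDerivAt
    have h2 := h1.mul (hL z hz).neg.cexp
    refine h2.congr_deriv ?_
    have := h0 z hz
    have h3 : g z * (deriv g z / g z) = deriv g z := by field_simp
    linear_combination (-Complex.exp (-L z)) * h3
  intro z hz
  have hc : g z * Complex.exp (-L z) = g 0 * Complex.exp (-L 0) := by
    have := (convex_ball (0:ℂ) 1).norm_image_sub_le_of_norm_hasDerivWithin_le (C := 0)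
      (fun x hx => (hder x hx).hasDerivWithinAt) (by simp) hmem hz
    simpa [sub_eq_zero] using this
  rw [hL0, Complex.exp_neg, Complex.exp_neg, Complex.exp_log (h0 0 hmem), mul_inv_cancel₀ (h0 0 hmem)] at hc
  have := Complex.exp_ne_zero (L z)
  field_simp at hc
  exact hc.symm

lemma sch_bloch {h : ℂ → ℂ} {c : ℂ} {R : ℝ} (hR : 0 < R) (hh : DifferentiableOn ℂ h (ball c R))
    (hom : ∀ w : ℂ, ∃ v, dist v w < 3 ∧ ∀ z ∈ ball c R, h z ≠ v) : ‖deriv h c‖ * R ≤ 288 := by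
  have hsub : closedBall c (R/2) ⊆ ball c R := closedBall_subset_ball (by linarith)
  have hd := hh.deriv isOpen_ball
  obtain ⟨p, hp, hmax⟩ := (isCompact_closedBall c (R/2)).exists_isMaxOn
    ⟨c, mem_closedBall_self (by linarith)⟩
    (f := fun z => ‖deriv h z‖ * (R/2 - dist z c))
    ((hd.continuousOn.mono hsub).norm.mul (by fun_prop))
  have hc := hmax (mem_closedBall_self (by linarith : 0 ≤ R/2))
  simp only [Set.mem_ofPred_eq, dist_self, sub_zero] at hc
  set A := ‖deriv h p‖ with hA
  have hpd : dist p c ≤ R/2 := hp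
  by_contra hcon
  push Not at hcon
  have hbig : 144 < A * (R/2 - dist p c) := by linarith
  obtain ⟨t, ht⟩ : ∃ t, t = (R/2 - dist p c)/2 := ⟨_, rfl⟩
  have hAnn : 0 ≤ A := norm_nonneg _
  have htpos : 0 < t := by
    rcases hpd.lt_or_eq with h1 | h1
    · linarith
    · rw [h1] at hbig; norm_num at hbig
  have hApos : 0 < A := by
    rcases hAnn.lt_or_eq with h1 | h1
    · exact h1
    · rw [← h1] at hbig; norm_num at hbig
  have hAt : 72 < A * t := by rw [ht]; linarith
  -- ball p t ⊆ closedBall c (R/2)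
  have hbt : ∀ z ∈ ball p t, z ∈ closedBall c (R/2) ∧ t ≤ R/2 - dist z c := by
    intro z hz
    have := dist_triangle z p c
    rw [mem_ball] at hz
    rw [mem_closedBall]
    constructor <;> linarith
  have hder2 : ∀ z ∈ ball p t, ‖deriv h z‖ ≤ 2 * A := by
    intro z hz
    have h1 := hmax (hbt z hz).1
    simp only [Set.mem_ofPred_eq] at h1
    have h2 : ‖deriv h z‖ * t ≤ A * (2*t) := by
      calc _ ≤ ‖deriv h z‖ * (R/2 - dist z c) := by gcongr; exact (hbt z hz).2
        _ ≤ A * (R/2 - dist p c) := h1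
        _ = _ := by rw [ht]; ring
    nlinarith
  have hbR : ball p t ⊆ ball c R := fun z hz => hsub (hbt z hz).1
  have hsch : ∀ z ∈ ball p t, dist (deriv h z) (deriv h p) ≤ 3 * A / t * dist z p := by
    intro z hz
    refine Complex.dist_le_div_mul_dist_of_mapsTo_ball (hd.mono hbR) ?_ hz
    intro w hw
    rw [mem_closedBall, dist_eq_norm]
    have := norm_sub_le (deriv h w) (deriv h p)
    have := hder2 w hw
    linarith
  have hst : closedBall p (t/6) ⊆ ball p t := closedBall_subset_ball (by linarith)
  have hdiff : ∀ z ∈ ball p t, DifferentiableAt ℂ h z := fun z hz =>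
    hh.differentiableAt (isOpen_ball.mem_nhds (hbR hz))
  have hlin : ∀ z ∈ closedBall p (t/6), ‖(h z - deriv h p * z) - (h p - deriv h p * p)‖ ≤ A/2 * ‖z - p‖ := by
    intro z hz
    refine (convex_closedBall p (t/6)).norm_image_sub_le_of_norm_hasDerivWithin_le
      (f := fun z => h z - deriv h p * z) (f' := fun z => deriv h z - deriv h p)
      (fun x hx => ?_) (fun x hx => ?_) (mem_closedBall_self (by linarith)) hz
    · have := (hdiff x (hst hx)).hasDerivAt.sub ((hasDerivAt_id x).const_mul (deriv h p))
      rw [mul_one] at this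
      exact this.hasDerivWithinAt
    · have h1 := hsch x (hst hx)
      rw [dist_eq_norm] at h1
      refine h1.trans ?_
      have h2 : dist x p ≤ t/6 := hx
      calc _ ≤ 3 * A / t * (t/6) := by gcongr
        _ = A/2 := by field_simp; norm_num
  have hball : ball (h p) (A * (t/6) / 2 / 2) ⊆ h '' closedBall p (t/6) := by
    refine DiffContOnCl.ball_subset_image_closedBall ?_ (by linarith) ?_ ?_
    · exact ((hh.mono (hst.trans hbR))).diffContOnCl_ball subset_rfl
    · intro z hz
      have h1 := hlin z (sphere_subset_closedBall hz)
      have h2 : ‖z - p‖ = t/6 := by rw [← dist_eq_norm]; exact hz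
      have h3 : ‖deriv h p * (z - p)‖ = A * (t/6) := by rw [norm_mul, h2]
      have h4 := norm_sub_norm_le (deriv h p * (z - p)) (-((h z - deriv h p * z) - (h p - deriv h p * p)))
      rw [norm_neg, h3] at h4
      rw [h2] at h1
      have h5 : deriv h p * (z - p) - -((h z - deriv h p * z) - (h p - deriv h p * p)) = h z - h p := by ring
      rw [h5] at h4
      linarith
    · have h1 := (hdiff p (mem_ball_self htpos)).hasDerivAt.eventually_ne (c := h p) (norm_pos_iff.mp hApos)
      exact h1.frequently.filter_mono nhdsWithin_le_nhds
  obtain ⟨v, hv, hv2⟩ := hom (h p)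
  obtain ⟨z, hz, hzv⟩ := hball (show v ∈ ball (h p) _ by rw [mem_ball]; linarith)
  exact hv2 z (hbR (hst hz)) hzv


lemma sch_real (x : ℝ) : ∃ t : ℝ, |t - x| ≤ 1 ∧ ∃ m : ℤ, Real.cosh t ^ 2 = m := by
  wlog hx : 0 ≤ x generalizing x
  · obtain ⟨t, ht, m, hm⟩ := this (-x) (by linarith)
    refine ⟨-t, ?_, m, by simpa using hm⟩
    rw [← abs_neg]; convert ht using 2; ring
  have h1 : Real.cosh x ^ 2 + 1 ≤ Real.cosh (x+1) ^ 2 := by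
    have a1 : 1 ≤ Real.sinh 1 := Real.self_le_sinh_iff.2 (by norm_num)
    have a2 : 0 ≤ Real.sinh x := Real.sinh_nonneg_iff.2 hx
    have a3 := Real.one_le_cosh x
    have a4 := Real.cosh_sq 1
    have a5 := Real.cosh_pos 1
    have a6 : Real.cosh x * Real.cosh 1 ≤ Real.cosh (x+1) := by
      rw [Real.cosh_add]; nlinarith
    calc Real.cosh x ^ 2 + 1 ≤ (Real.cosh x * Real.cosh 1)^2 := by
          rw [mul_pow, a4]
          have b1 : 1 ≤ Real.cosh x ^ 2 := one_le_pow₀ a3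
          have b2 : 1 ≤ Real.sinh 1 ^ 2 := one_le_pow₀ a1
          nlinarith
      _ ≤ _ := by gcongr
  have hm1 := Int.le_ceil (Real.cosh x ^ 2)
  have hm2 := Int.ceil_lt_add_one (Real.cosh x ^ 2)
  obtain ⟨t, ht, hte⟩ := intermediate_value_Icc (f := fun t => Real.cosh t ^ 2) (show x ≤ x + 1 by linarith)
    (Real.continuous_cosh.pow 2).continuousOn ⟨hm1, by linarith⟩
  exact ⟨t, by rw [abs_le]; constructor <;> linarith [ht.1, ht.2], _, hte⟩

lemma sch_omit (w : ℂ) : ∃ v, dist v w < 3 ∧ ∃ m : ℤ, Complex.cosh v ^ 2 = m := by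
  obtain ⟨t, ht, m, hm⟩ := sch_real w.re
  set k := round (w.im / Real.pi)
  have hk := abs_sub_round (w.im / Real.pi)
  refine ⟨t + (k * Real.pi : ℝ) * Complex.I, ?_, m, ?_⟩
  · rw [dist_eq_norm]
    refine (Complex.norm_le_abs_re_add_abs_im _).trans_lt ?_
    have e2 : |k * Real.pi - w.im| ≤ Real.pi / 2 := by
      have : k * Real.pi - w.im = -((w.im / Real.pi - k) * Real.pi) := by
        field_simp; ring
      rw [this, abs_neg, abs_mul, abs_of_pos Real.pi_pos]
      nlinarith [Real.pi_pos]
    have := Real.pi_lt_d2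
    simp
    linarith
  · rw [Complex.cosh_add, Complex.cosh_mul_I, Complex.sinh_mul_I, ← Complex.ofReal_sin, Real.sin_int_mul_pi]
    have : Complex.cos ((k * Real.pi : ℝ)) ^ 2 = 1 := by
      have h := Complex.sin_sq_add_cos_sq ((k * Real.pi : ℝ) : ℂ)
      rw [← Complex.ofReal_sin, Real.sin_int_mul_pi] at h
      simpa using h
    simp only [Complex.ofReal_zero, zero_mul, mul_zero, add_zero, mul_pow, this, mul_one]
    rw [← Complex.ofReal_cosh, ← Complex.ofReal_pow, hm]; simp

lemma sch_norm_log {w : ℂ} {K : ℝ} (hK : 1 ≤ K) (h1 : ‖w‖ ≤ K) (h2 : 1 / K ≤ ‖w‖) :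
    ‖Complex.log w‖ ≤ Real.log K + Real.pi := by
  refine (Complex.norm_le_abs_re_add_abs_im _).trans ?_
  rw [Complex.log_re, Complex.log_im]
  have hK0 : 0 < K := by linarith
  have hw : 0 < ‖w‖ := lt_of_lt_of_le (by positivity) h2
  have a1 := Real.log_le_log hw h1
  have a2 := Real.log_le_log (by positivity) h2
  rw [one_div, Real.log_inv] at a2
  have a3 := Complex.abs_arg_le_pi w
  have a4 : |Real.log ‖w‖| ≤ Real.log K := abs_le.2 ⟨a2, a1⟩
  linarith

lemma sch_disc1 (M : ℝ) (hM : 2 ≤ M) : ∃ C : ℝ, ∀ f : ℂ → ℂ, DifferentiableOn ℂ f (ball 0 1) →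
    (∀ z ∈ ball (0:ℂ) 1, f z ≠ 0 ∧ f z ≠ 1) → ‖f 0‖ ≤ M → 1 / 2 ≤ ‖f 0‖ →
    ∀ z ∈ closedBall (0:ℂ) (1/2), ‖f z‖ ≤ C := by
  obtain ⟨B, hB⟩ : ∃ B, B = Real.log M + Real.pi := ⟨_, rfl⟩
  obtain ⟨H, hH⟩ : ∃ H, H = Real.log (2 * B + 3) + Real.pi + 288 := ⟨_, rfl⟩
  refine ⟨Real.exp (2 * Real.pi * Real.exp H ^ 2), ?_⟩
  intro f hf hom hfM hf2
  have hmem : (0:ℂ) ∈ ball (0:ℂ) 1 := by simp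
  have hpi := Real.pi_gt_three
  have hlogM : 0 ≤ Real.log M := Real.log_nonneg (by linarith)
  have hB0 : 0 ≤ B := by linarith
  obtain ⟨L, hL, hL0, hLe⟩ := sch_log hf (fun z hz => (hom z hz).1)
  have hLB : ‖L 0‖ ≤ B := by
    rw [hL0, hB]
    refine sch_norm_log (by linarith) hfM (le_trans ?_ hf2)
    gcongr
  have hc0 : (2 * Real.pi * Complex.I : ℂ) ≠ 0 := Complex.two_pi_I_ne_zero
  obtain ⟨F, hFdef⟩ : ∃ F : ℂ → ℂ, F = fun z => L z / (2 * Real.pi * Complex.I) := ⟨_, rfl⟩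
  have hF : DifferentiableOn ℂ F (ball 0 1) := by rw [hFdef]; exact hL.div_const _
  have hFe : ∀ z ∈ ball (0:ℂ) 1, Complex.exp (2 * Real.pi * Complex.I * F z) = f z := by
    intro z hz
    rw [← hLe z hz, hFdef]
    congr 1
    field_simp
  have hF0 : ‖F 0‖ ≤ B := by
    have : ‖F 0‖ = ‖L 0‖ / (2 * Real.pi) := by
      rw [hFdef]; simp [abs_of_pos Real.pi_pos]
    rw [this, div_le_iff₀ (by positivity)]
    nlinarith
  have hFint : ∀ z ∈ ball (0:ℂ) 1, ∀ m : ℤ, F z ≠ m := by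
    intro z hz m hm
    apply (hom z hz).2
    rw [← hFe z hz, hm, mul_comm]
    exact Complex.exp_int_mul_two_pi_mul_I m
  obtain ⟨U, hU, -, hUe⟩ := sch_log hF (fun z hz => by simpa using hFint z hz 0)
  obtain ⟨V, hV, -, hVe⟩ := sch_log (g := fun z => F z - 1) (hF.sub_const 1)
    (fun z hz => by simpa [sub_eq_zero] using hFint z hz 1)
  obtain ⟨u, hu⟩ : ∃ u : ℂ → ℂ, u = fun z => Complex.exp (U z / 2) := ⟨_, rfl⟩
  obtain ⟨v, hv⟩ : ∃ v : ℂ → ℂ, v = fun z => Complex.exp (V z / 2) := ⟨_, rfl⟩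
  have hud : DifferentiableOn ℂ u (ball 0 1) := by rw [hu]; exact (hU.div_const 2).cexp
  have hvd : DifferentiableOn ℂ v (ball 0 1) := by rw [hv]; exact (hV.div_const 2).cexp
  have hu2 : ∀ z ∈ ball (0:ℂ) 1, u z ^ 2 = F z := by
    intro z hz
    rw [← hUe z hz, hu]; simp only
    rw [← Complex.exp_nat_mul]; congr 1; push_cast; ring
  have hv2 : ∀ z ∈ ball (0:ℂ) 1, v z ^ 2 = F z - 1 := by
    intro z hz
    rw [← hVe z hz, hv]; simp only
    rw [← Complex.exp_nat_mul]; congr 1; push_cast; ring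
  have huv : ∀ z ∈ ball (0:ℂ) 1, (u z - v z) * (u z + v z) = 1 := by
    intro z hz
    linear_combination hu2 z hz - hv2 z hz
  have hGne : ∀ z ∈ ball (0:ℂ) 1, u z - v z ≠ 0 := fun z hz => left_ne_zero_of_mul_eq_one (huv z hz)
  obtain ⟨h, hh, hh0, hhe⟩ := sch_log (g := fun z => u z - v z) (hud.sub hvd) hGne
  have hcosh : ∀ z ∈ ball (0:ℂ) 1, Complex.cosh (h z) = u z := by
    intro z hz
    have h1 : (u z - v z)⁻¹ = u z + v z := inv_eq_of_mul_eq_one_right (huv z hz)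
    rw [Complex.cosh, Complex.exp_neg, hhe z hz, h1]; ring
  have hu0 : ‖u 0‖ ≤ B + 1 := by
    have := congrArg norm (hu2 0 hmem); rw [norm_pow] at this
    nlinarith [norm_nonneg (u 0), norm_nonneg (F 0)]
  have hv0 : ‖v 0‖ ≤ B + 2 := by
    have := congrArg norm (hv2 0 hmem); rw [norm_pow] at this
    have h3 := norm_sub_le (F 0) 1
    rw [norm_one] at h3
    nlinarith [norm_nonneg (v 0), norm_nonneg (F 0)]
  have hh0b : ‖h 0‖ ≤ Real.log (2 * B + 3) + Real.pi := by
    rw [hh0]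
    refine sch_norm_log (by linarith) ((norm_sub_le _ _).trans (by linarith)) ?_
    have h1 := congrArg norm (huv 0 hmem)
    rw [norm_mul, norm_one] at h1
    have h2 : ‖u 0 + v 0‖ ≤ 2 * B + 3 := (norm_add_le _ _).trans (by linarith)
    rw [div_le_iff₀ (by linarith), ← h1]
    gcongr
  have hder : ∀ z ∈ closedBall (0:ℂ) (1/2), ‖deriv h z‖ ≤ 576 := by
    intro z hz
    have hzs : ball z (1/2) ⊆ ball 0 1 := by
      apply ball_subset_ball'
      rw [mem_closedBall] at hz; linarith
    have := sch_bloch (c := z) (R := 1/2) (by norm_num) (hh.mono hzs) (fun w => by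
      obtain ⟨x, hx, m, hm⟩ := sch_omit w
      refine ⟨x, hx, fun y hy hyx => ?_⟩
      apply hFint y (hzs hy) m
      rw [← hu2 y (hzs hy), ← hcosh y (hzs hy), hyx, hm])
    linarith
  have hsub : closedBall (0:ℂ) (1/2) ⊆ ball 0 1 := closedBall_subset_ball (by norm_num)
  intro z hz
  have hhz : ‖h z‖ ≤ H := by
    have h1 := (convex_closedBall (0:ℂ) (1/2)).norm_image_sub_le_of_norm_deriv_le
      (fun x hx => hh.differentiableAt (isOpen_ball.mem_nhds (hsub hx))) hder
      (mem_closedBall_self (by norm_num)) hz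
    have h2 : ‖z - 0‖ ≤ 1/2 := by simpa using hz
    have h3 := norm_sub_norm_le (h z) (h 0)
    linarith
  have huz : ‖u z‖ ≤ Real.exp H := by
    rw [← hcosh z (hsub hz), Complex.cosh, norm_div]
    have h1 := norm_add_le (Complex.exp (h z)) (Complex.exp (-h z))
    have h2 := Complex.norm_exp_le_exp_norm (h z)
    have h3 := Complex.norm_exp_le_exp_norm (-h z)
    rw [norm_neg] at h3
    have h4 := Real.exp_le_exp.2 hhz
    rw [Complex.norm_ofNat]
    linarith
  rw [← hFe z (hsub hz)]
  refine (Complex.norm_exp_le_exp_norm _).trans (Real.exp_le_exp.2 ?_)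
  rw [← hu2 z (hsub hz), norm_mul, norm_pow]
  have : ‖(2 * Real.pi * Complex.I : ℂ)‖ = 2 * Real.pi := by simp [abs_of_pos Real.pi_pos]
  rw [this]
  gcongr

lemma sch_disc (M : ℝ) : ∃ C : ℝ, ∀ f : ℂ → ℂ, DifferentiableOn ℂ f (ball 0 1) →
    (∀ z ∈ ball (0:ℂ) 1, f z ≠ 0 ∧ f z ≠ 1) → ‖f 0‖ ≤ M →
    ∀ z ∈ closedBall (0:ℂ) (1/2), ‖f z‖ ≤ C := by
  obtain ⟨C, hC⟩ := sch_disc1 (max M 2) (le_max_right _ _)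
  refine ⟨C + 1, fun f hf hom hfM z hz => ?_⟩
  rcases le_total (1/2) ‖f 0‖ with h | h
  · linarith [hC f hf hom (hfM.trans (le_max_left _ _)) h z hz]
  · have h1 := hC (fun z => 1 - f z) (hf.const_sub 1) (fun z hz => ⟨?_, ?_⟩) ?_ ?_ z hz
    · have h2 := norm_sub_norm_le (f z) 1
      rw [norm_sub_rev, norm_one] at h2
      linarith
    · exact sub_ne_zero.2 (hom z hz).2.symm
    · simpa using (hom z hz).1
    · have := norm_sub_le 1 (f 0)
      rw [norm_one] at this
      exact le_trans (by linarith) (le_max_right _ _)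
    · have := norm_sub_norm_le 1 (f 0)
      rw [norm_one] at this
      linarith

lemma sch_ball {E : Type*} [NormedAddCommGroup E] [NormedSpace ℂ E] (M : ℝ) :
    ∃ C : ℝ, ∀ (f : E → ℂ) (c : E) (R : ℝ), DifferentiableOn ℂ f (ball c R) →
    (∀ z ∈ ball c R, f z ≠ 0 ∧ f z ≠ 1) → ‖f c‖ ≤ M → ∀ z ∈ ball c (R/2), ‖f z‖ ≤ C := by
  obtain ⟨C, hC⟩ := sch_disc M
  refine ⟨C, fun f c R hf hom hfM z hz => ?_⟩
  have hR : 0 < R := by linarith [pos_of_mem_ball hz]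
  have hmaps : ∀ t ∈ ball (0:ℂ) 1, c + t • ((2:ℂ) • (z - c)) ∈ ball c R := by
    intro t ht
    rw [mem_ball_zero_iff] at ht
    rw [mem_ball, dist_eq_norm] at hz
    rw [mem_ball, dist_eq_norm, add_sub_cancel_left, norm_smul, norm_smul, Complex.norm_ofNat]
    nlinarith [norm_nonneg (z - c), norm_nonneg t]
  have h1 := hC (fun t => f (c + t • ((2:ℂ) • (z - c))))
    (hf.comp (by fun_prop) hmaps) (fun t ht => hom _ (hmaps t ht)) (by simpa using hfM) (1/2) (by simp)
  simpa [smul_smul] using h1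

/-- Schottky's theorem in a bounded domain Ω ⊂ ℂⁿ. -/
theorem schottky_general_domain {n : ℕ}
    (Ω : Set (EuclideanSpace ℂ (Fin n))) (hΩ : IsOpen Ω) (hconn : IsConnected Ω)
    (hbdd : Bornology.IsBounded Ω)
    (a : EuclideanSpace ℂ (Fin n)) (ha : a ∈ Ω) (M : ℝ) (hM : 0 < M) :
    ∃ ε₀ > 0, ∀ ε : ℝ, 0 < ε → ε ≤ ε₀ →
      ∃ C > 0, ∀ f : EuclideanSpace ℂ (Fin n) → ℂ,
        DifferentiableOn ℂ f Ω → (∀ z ∈ Ω, f z ≠ 0 ∧ f z ≠ 1) → ‖f a‖ < M →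
          ∀ z ∈ Ω, ε ≤ infDist z (frontier Ω) → ‖f z‖ < C := by
  refine ⟨1, one_pos, fun ε hε _ => ?_⟩
  let P : Set (EuclideanSpace ℂ (Fin n)) → Prop := fun U => ∃ C : ℝ,
    ∀ f : EuclideanSpace ℂ (Fin n) → ℂ,
        DifferentiableOn ℂ f Ω → (∀ z ∈ Ω, f z ≠ 0 ∧ f z ≠ 1) → ‖f a‖ < M →
          ∀ z ∈ U, ‖f z‖ ≤ C
  have hmono : ∀ U V, U ⊆ V → P V → P U := fun U V hUV ⟨C, hC⟩ =>
    ⟨C, fun f h1 h2 h3 z hz => hC f h1 h2 h3 z (hUV hz)⟩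
  -- local propagation
  have hloc : ∀ c R, ball c R ⊆ Ω → P {c} → P (ball c (R/2)) := by
    rintro c R hcR ⟨C, hC⟩
    obtain ⟨C', hC'⟩ := sch_ball (E := EuclideanSpace ℂ (Fin n)) C
    exact ⟨C', fun f h1 h2 h3 => hC' f c R (h1.mono hcR) (fun z hz => h2 z (hcR hz))
      (hC f h1 h2 h3 c rfl)⟩
  let S : Set (EuclideanSpace ℂ (Fin n)) := {z | ∃ r > 0, P (ball z r)}
  have hPa : P {a} := ⟨M, fun f _ _ h3 z hz => by rw [hz]; exact h3.le⟩
  have hΩS : Ω ⊆ S := by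
    refine hconn.isPreconnected.subset_of_closure_inter_subset ?_ ⟨a, ha, ?_⟩ ?_
    · rw [Metric.isOpen_iff]
      rintro z ⟨r, hr, hz⟩
      refine ⟨r/2, by linarith, fun w hw => ⟨r/2, by linarith, hmono _ _ ?_ hz⟩⟩
      apply ball_subset_ball'
      rw [mem_ball] at hw; linarith
    · obtain ⟨R, hR, hRΩ⟩ := Metric.isOpen_iff.1 hΩ a ha
      exact ⟨R/2, by linarith, hloc a R hRΩ hPa⟩
    · rintro w ⟨hw, hwΩ⟩
      obtain ⟨R, hR, hRΩ⟩ := Metric.isOpen_iff.1 hΩ w hwΩ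
      obtain ⟨z, ⟨r, hr, hz⟩, hzw⟩ := Metric.mem_closure_iff.1 hw (R/8) (by linarith)
      have h1 : P (ball z ((R/2)/2)) := by
        refine hloc z (R/2) (subset_trans ?_ hRΩ) (hmono _ _ (by simpa using hr) hz)
        apply ball_subset_ball'
        rw [dist_comm]; linarith
      refine ⟨R/8, by linarith, hmono _ _ ?_ h1⟩
      apply ball_subset_ball'
      linarith
  let K : Set (EuclideanSpace ℂ (Fin n)) := closure Ω ∩ {z | ε ≤ infDist z (frontier Ω)}
  have hK : IsCompact K := by
    refine IsCompact.inter_right hbdd.isCompact_closure ?_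
    exact isClosed_le continuous_const (continuous_infDist_pt _)
  have hKΩ : K ⊆ Ω := by
    rintro z ⟨hz, hz2⟩
    by_contra hcon
    have hfr : z ∈ frontier Ω := by rw [hΩ.frontier_eq]; exact ⟨hz, hcon⟩
    have := infDist_zero_of_mem hfr
    have h2 : ε ≤ infDist z (frontier Ω) := hz2
    linarith
  have hPK : P K := by
    refine hK.induction_on (p := P) ⟨0, by simp⟩ (fun s t hst ht => hmono s t hst ht) ?_ ?_
    · rintro s t ⟨C1, h1⟩ ⟨C2, h2⟩
      refine ⟨max C1 C2, fun f a1 a2 a3 z hz => ?_⟩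
      rcases hz with hz | hz
      · exact (h1 f a1 a2 a3 z hz).trans (le_max_left _ _)
      · exact (h2 f a1 a2 a3 z hz).trans (le_max_right _ _)
    · intro z hz
      obtain ⟨r, hr, hP⟩ := hΩS (hKΩ hz)
      exact ⟨ball z r, mem_nhdsWithin_of_mem_nhds (ball_mem_nhds z hr), hP⟩
  obtain ⟨C, hC⟩ := hPK
  refine ⟨max C 0 + 1, by positivity, fun f h1 h2 h3 z hz hz2 => ?_⟩
  have := hC f h1 h2 h3 z ⟨subset_closure hz, hz2⟩
  linarith [le_max_left C 0]
end

section
/- There exists a constant L ≥ 0 such that for every holomorphic function f on the unit disc Δ omitting 0 and 1 with |f(0)| < M, and for every r ∈ [0,1), one has |f(z)| < tan(arctan M + 2rL/(1 − r²)) for all |z| < r. -/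
open Metric Real

open Topology Filter in
/-- Sixth roots on the disc. -/
lemma aux_root (f : ℂ → ℂ) (hf : DifferentiableOn ℂ f (ball 0 1))
    (h0 : ∀ z ∈ ball (0 : ℂ) 1, f z ≠ 0) :
    ∃ g : ℂ → ℂ, DifferentiableOn ℂ g (ball 0 1) ∧ ∀ z ∈ ball (0 : ℂ) 1, g z ^ 6 = f z := by
  have hd : DifferentiableOn ℂ (fun z => deriv f z / f z) (ball 0 1) :=
    (hf.deriv isOpen_ball).div hf h0
  obtain ⟨P, hP⟩ := hd.isExactOn_ball
  have hk : ∀ z ∈ ball (0 : ℂ) 1, HasDerivAt (fun z => f z * Complex.exp (-P z)) 0 z := by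
    intro z hz
    have h1 := (hf.differentiableAt (isOpen_ball.mem_nhds hz)).hasDerivAt
    have h2 := h1.mul ((hP z hz).neg.cexp)
    have h3 := h0 z hz
    refine HasDerivAt.congr_deriv (f := fun z => f z * Complex.exp (-P z)) h2 ?_
    change deriv f z * Complex.exp (-P z)
      + f z * (Complex.exp (-P z) * -(deriv f z / f z)) = 0
    field_simp
    ring
  have hc : ∀ z ∈ ball (0 : ℂ) 1, f z * Complex.exp (-P z) = f 0 * Complex.exp (-P 0) := by
    intro z hz
    exact isOpen_ball.is_const_of_deriv_eq_zero (convex_ball (0 : ℂ) 1).isPreconnected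
      (fun w hw => (hk w hw).differentiableAt.differentiableWithinAt)
      (fun w hw => (hk w hw).deriv) hz (mem_ball_self one_pos)
  set C := f 0 * Complex.exp (-P 0) with hC
  have hC0 : C ≠ 0 := mul_ne_zero (h0 0 (mem_ball_self one_pos)) (Complex.exp_ne_zero _)
  refine ⟨fun z => Complex.exp ((P z + Complex.log C) / 6), ?_, ?_⟩
  · intro z hz
    have := (hP z hz).differentiableAt
    exact (((this.add_const _).div_const 6).cexp).differentiableWithinAt
  · intro z hz
    simp only
    rw [← Complex.exp_nat_mul]
    have : ((6 : ℕ) : ℂ) * ((P z + Complex.log C) / 6) = P z + Complex.log C := by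
      push_cast; ring
    rw [this, Complex.exp_add, Complex.exp_log hC0, ← hc z hz, Complex.exp_neg]
    field_simp [Complex.exp_ne_zero]

lemma aux_id (a b : ℂ) : (1 + ‖a‖ ^ 2) * (1 + ‖b‖ ^ 2)
    = ‖1 + (starRingEnd ℂ) a * b‖ ^ 2 + ‖b - a‖ ^ 2 := by
  simp only [← Complex.normSq_eq_norm_sq, Complex.normSq_apply]
  simp
  ring

lemma aux_id2 (R : ℝ) (a b : ℂ) : (R ^ 2 - ‖a‖ ^ 2) * (R ^ 2 - ‖b‖ ^ 2)
    = ‖(R : ℂ) ^ 2 - (starRingEnd ℂ) a * b‖ ^ 2 - R ^ 2 * ‖b - a‖ ^ 2 := by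
  simp only [← Complex.normSq_eq_norm_sq, Complex.normSq_apply]
  simp [← Complex.ofReal_pow]
  ring

open Topology Filter in
lemma aux_slope (g : ℂ → ℂ) (z₀ : ℂ) (hg : DifferentiableAt ℂ g z₀) :
    Tendsto (fun z => ‖g z - g z₀‖ ^ 2 / ‖z - z₀‖ ^ 2) (𝓝[≠] z₀) (𝓝 (‖deriv g z₀‖ ^ 2)) := by
  have h := (hasDerivAt_iff_tendsto_slope.1 hg.hasDerivAt).norm.pow 2
  refine h.congr fun z => ?_
  rw [slope_def_field, norm_div, div_pow]

set_option maxHeartbeats 1000000 in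
open Topology Filter in
lemma aux_key (g h F : ℂ → ℂ) (z₀ : ℂ) (R : ℝ) (hz : ‖z₀‖ < R)
    (hg : ∀ᶠ z in 𝓝 z₀, DifferentiableAt ℂ g z)
    (hh : ∀ᶠ z in 𝓝 z₀, DifferentiableAt ℂ h z)
    (hF : ∀ᶠ z in 𝓝 z₀, DifferentiableAt ℂ F z) (hF0 : F z₀ ≠ 0)
    (hmax : ∀ᶠ z in 𝓝 z₀,
      ‖F z‖ ^ 2 * (1 + ‖g z‖ ^ 2) * (1 + ‖h z‖ ^ 2) * (R ^ 2 - ‖z‖ ^ 2) ^ 2 ≤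
      ‖F z₀‖ ^ 2 * (1 + ‖g z₀‖ ^ 2) * (1 + ‖h z₀‖ ^ 2) * (R ^ 2 - ‖z₀‖ ^ 2) ^ 2) :
    (‖deriv g z₀‖ ^ 2 / (1 + ‖g z₀‖ ^ 2) ^ 2 + ‖deriv h z₀‖ ^ 2 / (1 + ‖h z₀‖ ^ 2) ^ 2)
      * (R ^ 2 - ‖z₀‖ ^ 2) ^ 2 ≤ 2 * R ^ 2 := by
  by_contra hcon
  push Not at hcon
  have hR : 0 < R := (norm_nonneg _).trans_lt hz
  set A := 1 + ‖g z₀‖ ^ 2 with hA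
  set B := 1 + ‖h z₀‖ ^ 2 with hB
  set C := R ^ 2 - ‖z₀‖ ^ 2 with hC
  have hA0 : 0 < A := by positivity
  have hB0 : 0 < B := by positivity
  have hC0 : 0 < C := by
    have := norm_nonneg z₀
    nlinarith
  let α : ℂ → ℝ := fun z => ‖1 + (starRingEnd ℂ) (g z₀) * g z‖ ^ 2
  let β : ℂ → ℝ := fun z => ‖1 + (starRingEnd ℂ) (h z₀) * h z‖ ^ 2
  let γ : ℂ → ℝ := fun z => ‖(R : ℂ) ^ 2 - (starRingEnd ℂ) z₀ * z‖ ^ 2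
  let p : ℂ → ℝ := fun z => ‖g z - g z₀‖ ^ 2
  let q : ℂ → ℝ := fun z => ‖h z - h z₀‖ ^ 2
  let d : ℂ → ℝ := fun z => ‖z - z₀‖ ^ 2
  have hα : ∀ z, A * (1 + ‖g z‖ ^ 2) = α z + p z := fun z => aux_id _ _
  have hβ : ∀ z, B * (1 + ‖h z‖ ^ 2) = β z + q z := fun z => aux_id _ _
  have hγ : ∀ z, C * (R ^ 2 - ‖z‖ ^ 2) = γ z - R ^ 2 * d z := fun z => aux_id2 _ _ _
  have hα0 : α z₀ = A ^ 2 := by have := hα z₀; simp only [p, sub_self, norm_zero] at this; linarith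
  have hβ0 : β z₀ = B ^ 2 := by have := hβ z₀; simp only [q, sub_self, norm_zero] at this; linarith
  have hγ0 : γ z₀ = C ^ 2 := by have := hγ z₀; simp only [d, sub_self, norm_zero] at this; linarith
  have hgc : ContinuousAt g z₀ := hg.self_of_nhds.continuousAt
  have hhc : ContinuousAt h z₀ := hh.self_of_nhds.continuousAt
  have tα : Tendsto α (𝓝[≠] z₀) (𝓝 (A ^ 2)) := by
    rw [← hα0]
    have : ContinuousAt α z₀ := by fun_prop
    exact this.tendsto.mono_left nhdsWithin_le_nhds
  have tβ : Tendsto β (𝓝[≠] z₀) (𝓝 (B ^ 2)) := by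
    rw [← hβ0]
    have : ContinuousAt β z₀ := by fun_prop
    exact this.tendsto.mono_left nhdsWithin_le_nhds
  have tγ : Tendsto γ (𝓝[≠] z₀) (𝓝 (C ^ 2)) := by
    rw [← hγ0]
    have : ContinuousAt γ z₀ := by fun_prop
    exact this.tendsto.mono_left nhdsWithin_le_nhds
  have td : Tendsto d (𝓝[≠] z₀) (𝓝 0) := by
    have h0 : d z₀ = 0 := by simp [d]
    rw [← h0]
    have : ContinuousAt d z₀ := by fun_prop
    exact this.tendsto.mono_left nhdsWithin_le_nhds
  have tp := aux_slope g z₀ hg.self_of_nhds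
  have tq := aux_slope h z₀ hh.self_of_nhds
  set X := ‖deriv g z₀‖ ^ 2
  set Y := ‖deriv h z₀‖ ^ 2
  have tE : Tendsto (fun z => (α z * (q z / d z) + β z * (p z / d z)
      + d z * (p z / d z) * (q z / d z)) * (γ z - d z * R ^ 2) ^ 2
      + α z * β z * (d z * (R ^ 2) ^ 2 - 2 * γ z * R ^ 2)) (𝓝[≠] z₀)
      (𝓝 ((A ^ 2 * Y + B ^ 2 * X + 0 * X * Y) * (C ^ 2 - 0 * R ^ 2) ^ 2
        + A ^ 2 * B ^ 2 * (0 * (R ^ 2) ^ 2 - 2 * C ^ 2 * R ^ 2))) :=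
    ((((tα.mul tq).add (tβ.mul tp)).add ((td.mul tp).mul tq)).mul
      ((tγ.sub (td.mul_const _)).pow 2)).add
      ((tα.mul tβ).mul ((td.mul_const _).sub ((tγ.const_mul 2).mul_const _)))
  have hpos : 0 < (A ^ 2 * Y + B ^ 2 * X + 0 * X * Y) * (C ^ 2 - 0 * R ^ 2) ^ 2
        + A ^ 2 * B ^ 2 * (0 * (R ^ 2) ^ 2 - 2 * C ^ 2 * R ^ 2) := by
    have e : (A ^ 2 * Y + B ^ 2 * X + 0 * X * Y) * (C ^ 2 - 0 * R ^ 2) ^ 2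
        + A ^ 2 * B ^ 2 * (0 * (R ^ 2) ^ 2 - 2 * C ^ 2 * R ^ 2)
        = A ^ 2 * B ^ 2 * C ^ 2 * ((X / A ^ 2 + Y / B ^ 2) * C ^ 2 - 2 * R ^ 2) := by
      field_simp
      ring
    rw [e]
    have : 0 < (X / A ^ 2 + Y / B ^ 2) * C ^ 2 - 2 * R ^ 2 := by linarith
    positivity
  have hE := tE.eventually (lt_mem_nhds hpos)
  let G : ℂ → ℂ := fun z => F z * (1 + (starRingEnd ℂ) (g z₀) * g z)
    * (1 + (starRingEnd ℂ) (h z₀) * h z) * ((R : ℂ) ^ 2 - (starRingEnd ℂ) z₀ * z) ^ 2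
  have hGn : ∀ z, ‖G z‖ ^ 2 = ‖F z‖ ^ 2 * α z * β z * γ z ^ 2 := by
    intro z
    simp only [G, α, β, γ, norm_mul, norm_pow]
    ring
  have hFne : ∀ᶠ z in 𝓝 z₀, F z ≠ 0 := hF.self_of_nhds.continuousAt.eventually_ne hF0
  have hlt : ∀ᶠ z in 𝓝[≠] z₀, ‖G z‖ < ‖G z₀‖ := by
    filter_upwards [hE, hmax.filter_mono nhdsWithin_le_nhds, hFne.filter_mono nhdsWithin_le_nhds,
      self_mem_nhdsWithin] with z h1 h2 h3 h4
    have hd : 0 < d z := by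
      have : z - z₀ ≠ 0 := sub_ne_zero.2 h4
      simp only [d]; positivity
    have h5 : α z * β z * γ z ^ 2 < (α z + p z) * (β z + q z) * (γ z - R ^ 2 * d z) ^ 2 := by
      have h6 := mul_pos hd h1
      have e : d z * ((α z * (q z / d z) + β z * (p z / d z)
        + d z * (p z / d z) * (q z / d z)) * (γ z - d z * R ^ 2) ^ 2
        + α z * β z * (d z * (R ^ 2) ^ 2 - 2 * γ z * R ^ 2))
        = (α z + p z) * (β z + q z) * (γ z - R ^ 2 * d z) ^ 2 - α z * β z * γ z ^ 2 := by
        field_simp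
        ring
      linarith
    have hFp : 0 < ‖F z‖ ^ 2 := by positivity
    have h7 := mul_lt_mul_of_pos_left h5 hFp
    have h8 := mul_le_mul_of_nonneg_left h2 (show 0 ≤ A * B * C ^ 2 by positivity)
    have h9 : ‖G z‖ ^ 2 < ‖G z₀‖ ^ 2 := by
      rw [hGn, hGn, hα0, hβ0, hγ0]
      rw [← hα, ← hβ, ← hγ] at h7
      calc ‖F z‖ ^ 2 * α z * β z * γ z ^ 2 = ‖F z‖ ^ 2 * (α z * β z * γ z ^ 2) := by ring
        _ < _ := h7
        _ = A * B * C ^ 2 * (‖F z‖ ^ 2 * (1 + ‖g z‖ ^ 2) * (1 + ‖h z‖ ^ 2)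
            * (R ^ 2 - ‖z‖ ^ 2) ^ 2) := by ring
        _ ≤ _ := h8
        _ = _ := by ring
    exact lt_of_pow_lt_pow_left₀ 2 (norm_nonneg _) h9
  have hloc : IsLocalMax (norm ∘ G) z₀ := by
    have := eventually_nhdsWithin_iff.1 hlt
    filter_upwards [this] with z hz
    by_cases e : z = z₀
    · rw [e]
    · exact (hz e).le
  have hGd : ∀ᶠ z in 𝓝 z₀, DifferentiableAt ℂ G z := by
    filter_upwards [hg, hh, hF] with z h1 h2 h3
    fun_prop
  have hconst := Complex.eventually_eq_of_isLocalMax_norm hGd hloc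
  obtain ⟨z, h1, h2⟩ := (hlt.and (hconst.filter_mono nhdsWithin_le_nhds)).exists
  rw [h2] at h1
  exact lt_irrefl _ h1

lemma aux_ineq1 (a b : ℝ) (ha : 0 ≤ a) (hb : 0 ≤ b) (hab : b ≤ a) (h : 1 ≤ a ^ 6 + b ^ 6) :
    (1 + a ^ 2) * (1 + b ^ 2) ≤ 162 * (a ^ 10 / (1 + b ^ 2) ^ 2) := by
  have h6 : b ^ 6 ≤ a ^ 6 := by gcongr
  have ha2 : 1 ≤ 2 * a ^ 2 := by
    by_contra hc
    push Not at hc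
    have : (a ^ 2) ^ 3 ≤ (1 / 2) ^ 3 := by gcongr; linarith
    nlinarith
  have hb2 : b ^ 2 ≤ a ^ 2 := by gcongr
  rw [mul_div_assoc', le_div_iff₀ (by positivity)]
  calc (1 + a ^ 2) * (1 + b ^ 2) * (1 + b ^ 2) ^ 2
      ≤ (3 * a ^ 2) * (3 * a ^ 2) * (3 * a ^ 2) ^ 2 := by gcongr <;> linarith
    _ = 81 * a ^ 8 * 1 := by ring
    _ ≤ 81 * a ^ 8 * (2 * a ^ 2) := by gcongr
    _ = 162 * a ^ 10 := by ring

lemma aux_ineq2 (a b : ℝ) (ha : 0 ≤ a) (hb : 0 ≤ b) (h : 1 ≤ a ^ 6 + b ^ 6) :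
    (1 + a ^ 2) * (1 + b ^ 2) ≤ 162 * (b ^ 10 / (1 + a ^ 2) ^ 2 + a ^ 10 / (1 + b ^ 2) ^ 2) := by
  have h1 : 0 ≤ b ^ 10 / (1 + a ^ 2) ^ 2 := by positivity
  have h2 : 0 ≤ a ^ 10 / (1 + b ^ 2) ^ 2 := by positivity
  rcases le_total b a with hab | hab
  · linarith [aux_ineq1 a b ha hb hab h]
  · linarith [aux_ineq1 b a hb ha hab (by linarith)]

open Topology Filter in
lemma aux_metric (g h : ℂ → ℂ) (hg : DifferentiableOn ℂ g (ball 0 1))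
    (hh : DifferentiableOn ℂ h (ball 0 1)) (hh0 : ∀ z ∈ ball (0 : ℂ) 1, h z ≠ 0)
    (hgh : ∀ z ∈ ball (0 : ℂ) 1, g z ^ 6 = h z ^ 6 + 1) (R : ℝ) (hR1 : R < 1)
    (z : ℂ) (hz : ‖z‖ < R) :
    ‖deriv g z / h z ^ 5‖ ^ 2 * (1 + ‖g z‖ ^ 2) * (1 + ‖h z‖ ^ 2) * (R ^ 2 - ‖z‖ ^ 2) ^ 2 ≤ 324 := by
  have hR : 0 < R := (norm_nonneg _).trans_lt hz
  let F : ℂ → ℂ := fun z => deriv g z / h z ^ 5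
  have hF : DifferentiableOn ℂ F (ball 0 1) :=
    (hg.deriv isOpen_ball).div (hh.pow 5) (fun z hz => pow_ne_zero _ (hh0 z hz))
  let v : ℂ → ℝ := fun z =>
    ‖F z‖ ^ 2 * (1 + ‖g z‖ ^ 2) * (1 + ‖h z‖ ^ 2) * (R ^ 2 - ‖z‖ ^ 2) ^ 2
  have hsub : closedBall (0 : ℂ) R ⊆ ball 0 1 := closedBall_subset_ball hR1
  have hvc : ContinuousOn v (closedBall 0 R) := by
    have h1 := hF.continuousOn.mono hsub
    have h2 := hg.continuousOn.mono hsub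
    have h3 := hh.continuousOn.mono hsub
    fun_prop
  obtain ⟨z₀, hz₀, hm⟩ := (isCompact_closedBall (0 : ℂ) R).exists_isMaxOn
    ⟨0, mem_closedBall_self hR.le⟩ hvc
  have hvz : v z ≤ v z₀ := hm (by simpa using hz.le)
  refine hvz.trans ?_
  have hz₀' : ‖z₀‖ ≤ R := by simpa using hz₀
  rcases eq_or_lt_of_le hz₀' with he | hlt
  · simp [v, he]
  by_cases hF0 : F z₀ = 0
  · simp [v, hF0]
  have hb : z₀ ∈ ball (0 : ℂ) 1 := hsub hz₀
  have hnb : ∀ᶠ w in 𝓝 z₀, w ∈ ball (0 : ℂ) 1 := isOpen_ball.mem_nhds hb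
  have hev : ∀ k : ℂ → ℂ, DifferentiableOn ℂ k (ball 0 1) →
      ∀ᶠ w in 𝓝 z₀, DifferentiableAt ℂ k w := fun k hk => by
    filter_upwards [hnb] with w hw using hk.differentiableAt (isOpen_ball.mem_nhds hw)
  have hmax : ∀ᶠ w in 𝓝 z₀, v w ≤ v z₀ := by
    have : ball (0 : ℂ) R ∈ 𝓝 z₀ := isOpen_ball.mem_nhds (by simpa using hlt)
    filter_upwards [this] with w hw using hm (ball_subset_closedBall hw)
  have key := aux_key g h F z₀ R hlt (hev g hg) (hev h hh) (hev F hF) hF0 hmax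
  have hder : g z₀ ^ 5 * deriv g z₀ = h z₀ ^ 5 * deriv h z₀ := by
    have h1 := ((hev g hg).self_of_nhds.hasDerivAt).pow 6
    have h2 := (((hev h hh).self_of_nhds.hasDerivAt).pow 6).add_const 1
    have h3 : (fun w => g w ^ 6) =ᶠ[𝓝 z₀] fun w => h w ^ 6 + 1 := by
      filter_upwards [hnb] with w hw using hgh w hw
    have h4 := (h2.congr_of_eventuallyEq h3).unique h1
    norm_num at h4
    have h5 : (6 : ℂ) * (g z₀ ^ 5 * deriv g z₀) = 6 * (h z₀ ^ 5 * deriv h z₀) := by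
      linear_combination -h4
    exact mul_left_cancel₀ (by norm_num) h5
  have hn := congrArg norm hder
  simp only [norm_mul, norm_pow] at hn
  have hbpos : 0 < ‖h z₀‖ := norm_pos_iff.2 (hh0 _ hb)
  have hsum : 1 ≤ ‖g z₀‖ ^ 6 + ‖h z₀‖ ^ 6 := by
    have e : (1 : ℂ) = g z₀ ^ 6 - h z₀ ^ 6 := by rw [hgh _ hb]; ring
    have := norm_sub_le (g z₀ ^ 6) (h z₀ ^ 6)
    rw [← e] at this
    simpa using this
  have hi := aux_ineq2 _ _ (norm_nonneg (g z₀)) hbpos.le hsum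
  have hv : v z₀ = (‖deriv g z₀‖ / ‖h z₀‖ ^ 5) ^ 2 * ((1 + ‖g z₀‖ ^ 2) * (1 + ‖h z₀‖ ^ 2))
      * (R ^ 2 - ‖z₀‖ ^ 2) ^ 2 := by
    simp only [v, F, norm_div, norm_pow]; ring
  rw [hv]
  set a := ‖g z₀‖
  set b := ‖h z₀‖
  set x := ‖deriv g z₀‖
  set y := ‖deriv h z₀‖
  have hy : y = a ^ 5 * x / b ^ 5 := by
    field_simp
    linarith
  calc (x / b ^ 5) ^ 2 * ((1 + a ^ 2) * (1 + b ^ 2)) * (R ^ 2 - ‖z₀‖ ^ 2) ^ 2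
      ≤ (x / b ^ 5) ^ 2 * (162 * (b ^ 10 / (1 + a ^ 2) ^ 2 + a ^ 10 / (1 + b ^ 2) ^ 2))
        * (R ^ 2 - ‖z₀‖ ^ 2) ^ 2 := by gcongr
    _ = 162 * ((x ^ 2 / (1 + a ^ 2) ^ 2 + y ^ 2 / (1 + b ^ 2) ^ 2)
        * (R ^ 2 - ‖z₀‖ ^ 2) ^ 2) := by
        rw [hy]; field_simp
    _ ≤ 162 * (2 * R ^ 2) := by gcongr
    _ ≤ 324 := by nlinarith

lemma aux_ineq3 (a b : ℝ) (ha : 0 ≤ a) (hb : 0 ≤ b) (h : b ^ 6 ≤ a ^ 6 + 1) :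
    a ^ 4 * b ^ 4 ≤ 4 * (1 + a ^ 12) := by
  have h4 : b ^ 4 ≤ 1 + b ^ 6 := by nlinarith [sq_nonneg (b ^ 2 - 1), sq_nonneg b, mul_nonneg (sq_nonneg b) (sq_nonneg (b ^ 2 - 1))]
  have h4a : a ^ 4 ≤ 1 + a ^ 6 := by nlinarith [sq_nonneg (a ^ 2 - 1), sq_nonneg a, mul_nonneg (sq_nonneg a) (sq_nonneg (a ^ 2 - 1))]
  calc a ^ 4 * b ^ 4 ≤ (1 + a ^ 6) * (1 + (a ^ 6 + 1)) := by gcongr; linarith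
    _ ≤ 4 * (1 + a ^ 12) := by nlinarith [sq_nonneg (a ^ 6 - 1)]

open Topology Filter in
lemma aux_spherical (f : ℂ → ℂ) (hf : DifferentiableOn ℂ f (ball 0 1))
    (h01 : ∀ z ∈ ball (0 : ℂ) 1, f z ≠ 0 ∧ f z ≠ 1) (z : ℂ) (hz : ‖z‖ < 1) :
    ‖deriv f z‖ * (1 - ‖z‖ ^ 2) ≤ 1000 * (1 + ‖f z‖ ^ 2) := by
  obtain ⟨g, hg, hgf⟩ := aux_root f hf (fun z hz => (h01 z hz).1)
  obtain ⟨h, hh, hhf⟩ := aux_root (fun z => f z - 1) (hf.sub_const 1)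
    (fun z hz => sub_ne_zero.2 (h01 z hz).2)
  have hh0 : ∀ z ∈ ball (0 : ℂ) 1, h z ≠ 0 := fun z hz e => by
    have := hhf z hz
    rw [e] at this
    exact sub_ne_zero.2 (h01 z hz).2 (by simpa using this.symm)
  have hgh : ∀ z ∈ ball (0 : ℂ) 1, g z ^ 6 = h z ^ 6 + 1 := fun z hz => by
    rw [hgf z hz, hhf z hz]; ring
  have hzb : z ∈ ball (0 : ℂ) 1 := by simpa using hz
  have hn0 := norm_nonneg z
  have hs : √((1 + ‖z‖ ^ 2) / 2) ^ 2 = (1 + ‖z‖ ^ 2) / 2 := Real.sq_sqrt (by positivity)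
  have hm := aux_metric g h hg hh hh0 hgh (√((1 + ‖z‖ ^ 2) / 2))
    (by rw [Real.sqrt_lt' one_pos]; nlinarith) z (by apply Real.lt_sqrt_of_sq_lt; nlinarith)
  rw [hs] at hm
  have hnb : ∀ᶠ w in 𝓝 z, w ∈ ball (0 : ℂ) 1 := isOpen_ball.mem_nhds hzb
  have hder : deriv f z = 6 * g z ^ 5 * deriv g z := by
    have h1 := ((hg.differentiableAt hnb).hasDerivAt).pow 6
    have h3 : f =ᶠ[𝓝 z] fun w => g w ^ 6 := by
      filter_upwards [hnb] with w hw using (hgf w hw).symm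
    have h4 := (h1.congr_of_eventuallyEq h3).deriv
    norm_num at h4
    exact h4
  have hfn : ‖f z‖ = ‖g z‖ ^ 6 := by rw [← hgf z hzb, norm_pow]
  have hbpos : 0 < ‖h z‖ := norm_pos_iff.2 (hh0 _ hzb)
  have hb6 : ‖h z‖ ^ 6 ≤ ‖g z‖ ^ 6 + 1 := by
    have := norm_sub_le (g z ^ 6) 1
    rw [hgh z hzb, add_sub_cancel_right, ← hgh z hzb] at this
    simpa using this
  have h3 := aux_ineq3 _ _ (norm_nonneg (g z)) hbpos.le hb6
  rw [hder, hfn]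
  simp only [norm_mul, norm_div, norm_pow, Complex.norm_ofNat] at hm ⊢
  have ha := norm_nonneg (g z)
  have hx := norm_nonneg (deriv g z)
  set a := ‖g z‖
  set b := ‖h z‖
  set x := ‖deriv g z‖
  have hD : 0 < 1 - ‖z‖ ^ 2 := by nlinarith
  have e : ((1 + ‖z‖ ^ 2) / 2 - ‖z‖ ^ 2) = (1 - ‖z‖ ^ 2) / 2 := by ring
  rw [e] at hm
  set D := 1 - ‖z‖ ^ 2
  have hw : (x / b ^ 5 * (a * b) * (D / 2)) ^ 2 ≤ 18 ^ 2 := by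
    calc (x / b ^ 5 * (a * b) * (D / 2)) ^ 2
        = (x / b ^ 5) ^ 2 * (a ^ 2) * (b ^ 2) * (D / 2) ^ 2 := by ring
      _ ≤ (x / b ^ 5) ^ 2 * (1 + a ^ 2) * (1 + b ^ 2) * (D / 2) ^ 2 := by gcongr <;> linarith
      _ ≤ 18 ^ 2 := by linarith
  have hw' := (pow_le_pow_iff_left₀ (by positivity) (by norm_num) two_ne_zero).1 hw
  calc 6 * a ^ 5 * x * D = 12 * (x / b ^ 5 * (a * b) * (D / 2)) * (a ^ 4 * b ^ 4) := by
        field_simp; ring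
    _ ≤ 12 * 18 * (4 * (1 + a ^ 12)) := by gcongr
    _ ≤ 1000 * (1 + (a ^ 6) ^ 2) := by nlinarith [sq_nonneg (a ^ 6)]

/-- Quantitative Schottky theorem in the unit disc. -/
theorem schottky_quantitative :
    ∃ L : ℝ, 0 ≤ L ∧
      ∀ f : ℂ → ℂ, DifferentiableOn ℂ f (ball 0 1) →
        (∀ z ∈ ball (0 : ℂ) 1, f z ≠ 0 ∧ f z ≠ 1) →
        ∀ M : ℝ, 0 < M → ‖f 0‖ < M →
        ∀ r : ℝ, 0 ≤ r → r < 1 →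
          arctan M + 2 * r * L / (1 - r ^ 2) < π / 2 →
          ∀ z : ℂ, ‖z‖ < r →
            ‖f z‖ < Real.tan (arctan M + 2 * r * L / (1 - r ^ 2)) := by
  refine ⟨1000, by norm_num, ?_⟩
  intro f hf h01 M hM hfM r hr0 hr1 hlt z hz
  have hr2 : 0 < 1 - r ^ 2 := by nlinarith
  have hmem : ∀ t ∈ Set.Icc (0 : ℝ) 1, ‖(t : ℂ) * z‖ ≤ r := by
    intro t ht
    rw [norm_mul, Complex.norm_real, Real.norm_of_nonneg ht.1]
    nlinarith [ht.1, ht.2, norm_nonneg z]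
  have hder : ∀ t ∈ Set.Icc (0 : ℝ) 1, ∃ c : ℝ,
      HasDerivAt (fun t : ℝ => arctan ‖f (t * z)‖) c t ∧ ‖c‖ ≤ 2 * r * 1000 / (1 - r ^ 2) := by
    intro t ht
    have hm := hmem t ht
    have hb : (t : ℂ) * z ∈ ball (0 : ℂ) 1 := by
      rw [mem_ball_zero_iff]; linarith
    have h1 : HasDerivAt (fun t : ℝ => (t : ℂ) * z) z t := by
      simpa using (Complex.ofRealCLM.hasDerivAt (x := t)).mul_const z
    have h2 := (hf.differentiableAt (isOpen_ball.mem_nhds hb)).hasDerivAt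
    have h3 : HasDerivAt (fun t : ℝ => f (t * z)) (deriv f (t * z) * z) t :=
      h2.comp t h1
    have hne : f (t * z) ≠ 0 := (h01 _ hb).1
    have hnp : 0 < ‖f (t * z)‖ := norm_pos_iff.2 hne
    have h4 := (h3.norm_sq.sqrt (by positivity)).arctan
    have hsq : ∀ s : ℝ, √(‖f (s * z)‖ ^ 2) = ‖f (s * z)‖ := fun s => Real.sqrt_sq (norm_nonneg _)
    simp only [Pi.pow_apply, hsq] at h4
    refine ⟨_, h4, ?_⟩
    have hin := abs_real_inner_le_norm (f (t * z)) (deriv f (t * z) * z)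
    have hsp := aux_spherical f hf h01 _ (mem_ball_zero_iff.1 hb)
    rw [norm_mul] at hin
    set I := inner ℝ (f (t * z)) (deriv f (t * z) * z)
    set w := ‖f (t * z)‖
    set x := ‖deriv f (t * z)‖
    have hx : 0 ≤ x := norm_nonneg _
    have hx1 : x * (1 - r ^ 2) ≤ 1000 * (1 + w ^ 2) := by
      refine le_trans ?_ hsp
      gcongr
    have e : 1 / (1 + w ^ 2) * (2 * I / (2 * w)) = I / (w * (1 + w ^ 2)) := by
      field_simp
    rw [e, Real.norm_eq_abs, abs_div, abs_of_pos (show 0 < w * (1 + w ^ 2) by positivity),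
      div_le_div_iff₀ (by positivity) hr2]
    calc |I| * (1 - r ^ 2) ≤ w * (x * ‖z‖) * (1 - r ^ 2) := by gcongr
      _ = w * ‖z‖ * (x * (1 - r ^ 2)) := by ring
      _ ≤ w * r * (1000 * (1 + w ^ 2)) := by gcongr
      _ ≤ 2 * (w * r * (1000 * (1 + w ^ 2))) := by
        have : 0 ≤ w * r * (1000 * (1 + w ^ 2)) := by positivity
        linarith
      _ = _ := by ring
  have hmv := norm_image_sub_le_of_norm_deriv_le_segment_01'
    (f := fun t : ℝ => arctan ‖f (t * z)‖) (f' := deriv (fun t : ℝ => arctan ‖f (t * z)‖))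
    (C := 2 * r * 1000 / (1 - r ^ 2))
    (fun t ht => by
      obtain ⟨c, hc, -⟩ := hder t ht
      exact hc.differentiableAt.hasDerivAt.hasDerivWithinAt)
    (fun t ht => by
      obtain ⟨c, hc, hb⟩ := hder t ⟨ht.1, ht.2.le⟩
      rw [hc.deriv]; exact hb)
  simp only [Complex.ofReal_one, one_mul, Complex.ofReal_zero, zero_mul] at hmv
  have h5 : arctan ‖f z‖ < arctan M + 2 * r * 1000 / (1 - r ^ 2) := by
    have h6 := (le_abs_self _).trans hmv
    have h7 := arctan_strictMono hfM
    linarith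
  have h8 := tan_lt_tan_of_lt_of_lt_pi_div_two (neg_pi_div_two_lt_arctan _) hlt h5
  rwa [tan_arctan] at h8
end
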